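/- arXiv:1704.07674 — 8 statements merged into one kernel-verified Lean document; each statement's English description precedes it below -/
import Mathlib

section
/- Let S⁽ⁱ⁾ and S⁽ʲ⁾ be symmetric positive semidefinite real n×n matrices, let S̄⁽ⁱ⁾ and S̄⁽ʲ⁾ be symmetric positive definite real n×n matrices, let D⁽ⁱ⁾ and D⁽ʲ⁾ be arbitrary real n×n matrices, and let Θ ≥ 1 be a real number. Set M := (D⁽ⁱ⁾)ᵀ S⁽ʲ⁾ D⁽ⁱ⁾ + (D⁽ʲ⁾)ᵀ S⁽ⁱ⁾ D⁽ʲ⁾ and N := S̄⁽ʲ⁾ (S̄⁽ⁱ⁾ + S̄⁽ʲ⁾)⁻¹ S̄⁽ⁱ⁾ (the parallel sum). Suppose v₁, …, vₙ ∈ ℝⁿ satisfy M vₗ = λₗ N vₗ with vₗᵀ N vₘ = δₗₘ, and let d ≤ n with λₗ ≤ Θ for l = 1, …, d. Then for any coefficients c₁, …, cₙ ∈ ℝ, setting w_Δ = Σ_{l=1}^{d} cₗ vₗ and w_Π = Σ_{l=d+1}^{n} cₗ vₗ, one has (w_Δ)ᵀ M w_Δ ≤ Θ (w_Δ + w_Π)ᵀ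 S̄⁽ⁱ⁾ (w_Δ + w_Π). -/
open Matrix Finset

/-!
By `N`-orthonormality, the forms of `M` and `N` are diagonal in the family `v`, with diagonals `lam`
and `1`. Dropping the coefficients of `w_Π` therefore only decreases the form of `N`, and on the
remaining span the form of `M` is at most `Θ` times that of `N`. Finally, with `A = S̄⁽ⁱ⁾` and
`B = S̄⁽ʲ⁾`, the matrix `A - A : B = A (A + B)⁻¹ A` is positive semidefinite, so the form of
`N = A : B` is at most that of `A`.
-/

section ParallelSum

variable {n R : Type*} [Fintype n] [DecidableEq n] [CommRing R]

/-- The parallel sum `A : B` of two square matrices. The inverse is junk (zero) unless `A + B` is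
invertible. -/
noncomputable def parallelSum (A B : Matrix n n R) : Matrix n n R :=
  B * (A + B)⁻¹ * A

theorem sub_parallelSum {A B : Matrix n n R} (hAB : IsUnit (A + B)) :
    A - parallelSum A B = A * (A + B)⁻¹ * A := by
  have mul_inv_add : A * (A + B)⁻¹ * A + B * (A + B)⁻¹ * A = A := by
    rw [← add_mul, ← add_mul, mul_nonsing_inv _ ((isUnit_iff_isUnit_det _).1 hAB), one_mul]
  exact sub_eq_of_eq_add mul_inv_add.symm

variable [PartialOrder R] [StarRing R]

theorem posSemidef_sub_parallelSum {A B : Matrix n n R} (hA : A.IsHermitian)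
    (hAB : (A + B).PosSemidef) (hU : IsUnit (A + B)) : (A - parallelSum A B).PosSemidef := by
  simpa only [sub_parallelSum hU, hA.eq] using hAB.inv.conjTranspose_mul_mul_same A

theorem dotProduct_parallelSum_mulVec_le [IsOrderedAddMonoid R] {A B : Matrix n n R}
    (hA : A.IsHermitian) (hAB : (A + B).PosSemidef) (hU : IsUnit (A + B)) (w : n → R) :
    star w ⬝ᵥ parallelSum A B *ᵥ w ≤ star w ⬝ᵥ A *ᵥ w := by
  simpa only [sub_mulVec, dotProduct_sub, sub_nonneg] using
    (posSemidef_sub_parallelSum hA hAB hU).dotProduct_mulVec_nonneg w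

end ParallelSum

/-- An `N`-orthonormal family `v` of generalized eigenvectors of the pencil `(M, N)`, with
eigenvalues `lam`; orthonormality refers to the sesquilinear form `star x ⬝ᵥ N *ᵥ y`. -/
structure IsOrthonormalEigenfamily {n ι R : Type*} [Fintype n] [DecidableEq ι] [CommSemiring R]
    [StarRing R] (M N : Matrix n n R) (v : ι → n → R) (lam : ι → R) : Prop where
  mulVec_eq : ∀ l, M *ᵥ v l = lam l • N *ᵥ v l
  dotProduct_mulVec_eq : ∀ l m, star (v l) ⬝ᵥ N *ᵥ v m = if l = m then 1 else 0

namespace IsOrthonormalEigenfamily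

variable {n ι R : Type*} [Fintype n] [DecidableEq ι]

section CommSemiring

variable [CommSemiring R] [StarRing R] {M N : Matrix n n R} {v : ι → n → R} {lam : ι → R}

theorem self_one (h : IsOrthonormalEigenfamily M N v lam) :
    IsOrthonormalEigenfamily N N v 1 where
  mulVec_eq _ := (one_smul R _).symm
  dotProduct_mulVec_eq := h.dotProduct_mulVec_eq

theorem dotProduct_mulVec_sum_smul (h : IsOrthonormalEigenfamily M N v lam) (c : ι → R)
    (s : Finset ι) :
    star (∑ l ∈ s, c l • v l) ⬝ᵥ M *ᵥ (∑ l ∈ s, c l • v l) =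
      ∑ l ∈ s, star (c l) * lam l * c l := by
  have entry (l m : ι) : star (c l • v l) ⬝ᵥ M *ᵥ (c m • v m) =
      if l = m then star (c l) * lam m * c m else 0 := by
    simp only [star_smul, mulVec_smul, h.mulVec_eq, smul_dotProduct, dotProduct_smul,
      h.dotProduct_mulVec_eq, smul_eq_mul]
    split_ifs <;> ring
  simp only [star_sum, mulVec_sum, sum_dotProduct, dotProduct_sum, entry]
  exact sum_congr rfl fun l hl => by rw [sum_ite_eq', if_pos hl]

end CommSemiring

variable [CommRing R] [PartialOrder R] [StarRing R] [StarOrderedRing R]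
  {M N : Matrix n n R} {v : ι → n → R} {lam : ι → R}

theorem dotProduct_mulVec_sum_smul_le (h : IsOrthonormalEigenfamily M N v lam) {Θ : R}
    (hΘ : 0 ≤ Θ) {s t : Finset ι} (hst : s ⊆ t) (hlam : ∀ l ∈ s, lam l ≤ Θ) (c : ι → R) :
    star (∑ l ∈ s, c l • v l) ⬝ᵥ M *ᵥ (∑ l ∈ s, c l • v l) ≤
      Θ * (star (∑ l ∈ t, c l • v l) ⬝ᵥ N *ᵥ (∑ l ∈ t, c l • v l)) := by
  rw [h.dotProduct_mulVec_sum_smul, h.self_one.dotProduct_mulVec_sum_smul]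
  calc ∑ l ∈ s, star (c l) * lam l * c l
      ≤ ∑ l ∈ s, star (c l) * Θ * c l :=
        sum_le_sum fun l hl => star_left_conjugate_le_conjugate (hlam l hl) (c l)
    _ ≤ ∑ l ∈ t, star (c l) * Θ * c l :=
        sum_le_sum_of_subset_of_nonneg hst fun l _ _ => star_left_conjugate_nonneg hΘ (c l)
    _ = Θ * ∑ l ∈ t, star (c l) * (1 : ι → R) l * c l := by
        rw [mul_sum]
        exact sum_congr rfl fun l _ => by rw [Pi.one_apply]; ring

end IsOrthonormalEigenfamily

theorem adaptive_bddc_local_estimate_general {n ι R : Type*} [Fintype n] [DecidableEq n]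
    [DecidableEq ι] [CommRing R] [PartialOrder R] [StarRing R] [StarOrderedRing R]
    {A B M : Matrix n n R} (hA : A.IsHermitian) (hAB : (A + B).PosSemidef) (hU : IsUnit (A + B))
    {v : ι → n → R} {lam : ι → R} (hv : IsOrthonormalEigenfamily M (parallelSum A B) v lam)
    {Θ : R} (hΘ : 0 ≤ Θ) {s t : Finset ι} (hst : Disjoint s t) (hlam : ∀ l ∈ s, lam l ≤ Θ)
    (c : ι → R) :
    star (∑ l ∈ s, c l • v l) ⬝ᵥ M *ᵥ (∑ l ∈ s, c l • v l) ≤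
      Θ * (star (∑ l ∈ s, c l • v l + ∑ l ∈ t, c l • v l) ⬝ᵥ
        A *ᵥ (∑ l ∈ s, c l • v l + ∑ l ∈ t, c l • v l)) := by
  rw [← sum_union hst]
  exact (hv.dotProduct_mulVec_sum_smul_le hΘ subset_union_left hlam c).trans
    (mul_le_mul_of_nonneg_left (dotProduct_parallelSum_mulVec_le hA hAB hU _) hΘ)

/-- Adaptive BDDC local estimate: with `M := (D⁽ⁱ⁾)ᵀ S⁽ʲ⁾ D⁽ⁱ⁾ + (D⁽ʲ⁾)ᵀ S⁽ⁱ⁾ D⁽ʲ⁾`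
and `N` the parallel sum `S̄⁽ⁱ⁾ : S̄⁽ʲ⁾`, and `N`-orthonormal generalized
eigenvectors of the pencil `(M, N)` whose first `d` eigenvalues are at most
`Θ ≥ 1`, one has `(w_Δ)ᵀ M w_Δ ≤ Θ (w_Δ + w_Π)ᵀ S̄⁽ⁱ⁾ (w_Δ + w_Π)`. -/
theorem adaptive_bddc_local_estimate {n : ℕ}
    (Si Sj : Matrix (Fin n) (Fin n) ℝ) (hSi : Si.PosSemidef) (hSj : Sj.PosSemidef)
    (Sbi Sbj : Matrix (Fin n) (Fin n) ℝ) (hSbi : Sbi.PosDef) (hSbj : Sbj.PosDef)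
    (Di Dj : Matrix (Fin n) (Fin n) ℝ) (Θ : ℝ) (hΘ : 1 ≤ Θ)
    (M N : Matrix (Fin n) (Fin n) ℝ)
    (hMdef : M = Diᵀ * Sj * Di + Djᵀ * Si * Dj)
    (hNdef : N = Sbj * (Sbi + Sbj)⁻¹ * Sbi)
    (v : Fin n → Fin n → ℝ) (lam : Fin n → ℝ)
    (hev : ∀ l, M.mulVec (v l) = lam l • N.mulVec (v l))
    (horth : ∀ l m, v l ⬝ᵥ N.mulVec (v m) = if l = m then 1 else 0)
    (d : ℕ) (hd : d ≤ n)
    (hlam : ∀ l : Fin n, (l : ℕ) < d → lam l ≤ Θ)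
    (c : Fin n → ℝ) :
    (∑ l ∈ Finset.univ.filter (fun l : Fin n => (l : ℕ) < d), c l • v l) ⬝ᵥ
        M.mulVec (∑ l ∈ Finset.univ.filter (fun l : Fin n => (l : ℕ) < d), c l • v l) ≤
      Θ * (((∑ l ∈ Finset.univ.filter (fun l : Fin n => (l : ℕ) < d), c l • v l) +
            (∑ l ∈ Finset.univ.filter (fun l : Fin n => d ≤ (l : ℕ)), c l • v l)) ⬝ᵥ
          Sbi.mulVec ((∑ l ∈ Finset.univ.filter (fun l : Fin n => (l : ℕ) < d), c l • v l) +
            (∑ l ∈ Finset.univ.filter (fun l : Fin n => d ≤ (l : ℕ)), c l • v l))) := by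
  subst hNdef
  exact adaptive_bddc_local_estimate_general hSbi.isHermitian (hSbi.add hSbj).posSemidef
    (hSbi.add hSbj).isUnit ⟨hev, horth⟩ (zero_le_one.trans hΘ)
    (disjoint_filter.2 fun _ _ => not_le.2) (fun l hl => hlam l (mem_filter.1 hl).2) c
end

section
/- Let S be a symmetric positive definite real n×n matrix and let E₁, …, E_N be real n×nᵢ matrices, each of full column rank, satisfying the cross-orthogonality condition Eᵢᵀ S Eⱼ = 0 for all i ≠ j. Define S_Δ⁻ := Σ_{i=1}^{N} Eᵢ (Eᵢᵀ S Eᵢ)⁻¹ Eᵢᵀ. Then for any vectors gᵢ ∈ ℝ^{nᵢ} (i = 1, …, N), one has S_Δ⁻ S (Σ_{i=1}^{N} Eᵢ gᵢ) = Σ_{i=1}^{N} Eᵢ gᵢ; that is, S_Δ⁻ S acts as the identity on the sum of the column spaces of the Eᵢ. -/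
open Matrix Finset

section ObliqueProjection

variable {R n p ι : Type*} [CommRing R] [Fintype n] [Fintype p]

/-- The oblique projection `E (F S E)⁻¹ F S` onto the column space of `E` along the kernel of
`F S`; for `F = Eᵀ` and `S` symmetric positive definite it is the `S`-orthogonal projection.
The inverse is `0` when `F S E` is singular, so this is a projection onto that column space only
for invertible `F S E`. -/
noncomputable def obliqueProj {m : Type*} [Fintype m] [DecidableEq m]
    (S : Matrix p n R) (F : Matrix m p R) (E : Matrix n m R) : Matrix n n R :=
  E * (F * S * E)⁻¹ * F * S

theorem obliqueProj_mul {m k : Type*} [Fintype m] [DecidableEq m]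
    (S : Matrix p n R) (F : Matrix m p R) (E : Matrix n m R) (A : Matrix n k R) :
    obliqueProj S F E * A = E * ((F * S * E)⁻¹ * (F * S * A)) := by
  simp only [obliqueProj, Matrix.mul_assoc]

theorem obliqueProj_mul_self {m : Type*} [Fintype m] [DecidableEq m]
    {S : Matrix p n R} {F : Matrix m p R} {E : Matrix n m R} (hunit : IsUnit (F * S * E)) :
    obliqueProj S F E * E = E := by
  rw [obliqueProj_mul, nonsing_inv_mul _ ((isUnit_iff_isUnit_det _).mp hunit), Matrix.mul_one]

theorem obliqueProj_mul_eq_zero {m k : Type*} [Fintype m] [DecidableEq m]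
    {S : Matrix p n R} {F : Matrix m p R} (E : Matrix n m R) {A : Matrix n k R}
    (hA : F * S * A = 0) : obliqueProj S F E * A = 0 := by
  rw [obliqueProj_mul, hA, Matrix.mul_zero, Matrix.mul_zero]

variable [Fintype ι] {m : ι → Type*} [∀ i, Fintype (m i)] [∀ i, DecidableEq (m i)]
  {S : Matrix p n R} {F : ∀ i, Matrix (m i) p R} {E : ∀ i, Matrix n (m i) R}

theorem sum_obliqueProj_mul (hunit : ∀ i, IsUnit (F i * S * E i))
    (horth : ∀ i j, i ≠ j → F i * S * E j = 0) (j : ι) :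
    (∑ i, obliqueProj S (F i) (E i)) * E j = E j := by
  rw [Matrix.sum_mul, Fintype.sum_eq_single j fun i hij =>
    obliqueProj_mul_eq_zero (E i) (horth i j hij)]
  exact obliqueProj_mul_self (hunit j)

theorem sDelta_inv_mul_S_id_general (hunit : ∀ i, IsUnit (F i * S * E i))
    (horth : ∀ i j, i ≠ j → F i * S * E j = 0) (g : ∀ i, m i → R) :
    ((∑ i, E i * (F i * S * E i)⁻¹ * F i) * S) *ᵥ (∑ i, E i *ᵥ g i) = ∑ i, E i *ᵥ g i := by
  have sum_mul_eq_sum_obliqueProj :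
      (∑ i, E i * (F i * S * E i)⁻¹ * F i) * S = ∑ i, obliqueProj S (F i) (E i) :=
    Matrix.sum_mul ..
  simp only [sum_mul_eq_sum_obliqueProj, mulVec_sum, mulVec_mulVec,
    sum_obliqueProj_mul hunit horth]

end ObliqueProjection

theorem isUnit_transpose_mul_mul_of_posDef {K n m : Type*} [Field K] [PartialOrder K] [StarRing K]
    [TrivialStar K] [Fintype n] [Fintype m] [DecidableEq m]
    {S : Matrix n n K} (hS : S.PosDef) {E : Matrix n m K} (hE : Function.Injective E.mulVec) :
    IsUnit (Eᵀ * S * E) := by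
  rw [← conjTranspose_eq_transpose_of_trivial]
  exact (hS.conjTranspose_mul_mul_same hE).isUnit

/-- Let `S` be symmetric positive definite and `E i` full-column-rank matrices
with cross-orthogonality `Eᵢᵀ S Eⱼ = 0` for `i ≠ j`.  Then
`S_Δ⁻ S := (∑ i, Eᵢ (Eᵢᵀ S Eᵢ)⁻¹ Eᵢᵀ) S` acts as the identity on the sum of
the column spaces of the `Eᵢ`. -/
theorem sDelta_inv_mul_S_id {n N : ℕ} (S : Matrix (Fin n) (Fin n) ℝ)
    (hS : S.PosDef) (ni : Fin N → ℕ)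
    (E : ∀ i : Fin N, Matrix (Fin n) (Fin (ni i)) ℝ)
    (hrank : ∀ i, Function.Injective (E i).mulVec)
    (horth : ∀ i j, i ≠ j → (E i)ᵀ * S * E j = 0)
    (g : ∀ i : Fin N, Fin (ni i) → ℝ) :
    ((∑ i, E i * ((E i)ᵀ * S * E i)⁻¹ * (E i)ᵀ) * S).mulVec
        (∑ i, (E i).mulVec (g i)) = ∑ i, (E i).mulVec (g i) :=
  sDelta_inv_mul_S_id_general (fun i => isUnit_transpose_mul_mul_of_posDef hS (hrank i)) horth g
end

section
/- Let S be a symmetric positive definite real n×n matrix and let E₁, …, E_N be real n×nᵢ matrices, each of full column rank, satisfying Eᵢᵀ S Eⱼ = 0 for all i ≠ j. Define S_Δ⁻ := Σ_{i=1}^{N} Eᵢ (Eᵢᵀ S Eᵢ)⁻¹ Eᵢᵀ. Then the matrix S_Δ⁻ S is idempotent: (S_Δ⁻ S)² = S_Δ⁻ S. -/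
open Matrix Finset

section ObliqueProjection

variable {R m k l ι : Type*} [CommRing R] [Fintype m]
  [Fintype k] [DecidableEq k] [Fintype l] [DecidableEq l]

/-- The oblique projection onto the column space of `E` along the kernel of `F`. It has this
meaning only when `F * E` is invertible: otherwise `(F * E)⁻¹ = 0` and the value is `0`. -/
noncomputable def obliqueProjection (E : Matrix m k R) (F : Matrix k m R) : Matrix m m R :=
  E * (F * E)⁻¹ * F

theorem isIdempotentElem_obliqueProjection {E : Matrix m k R} {F : Matrix k m R}
    (hFE : IsUnit (F * E)) : IsIdempotentElem (obliqueProjection E F) :=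
  calc E * (F * E)⁻¹ * F * (E * (F * E)⁻¹ * F)
      = E * ((F * E)⁻¹ * (F * E)) * (F * E)⁻¹ * F := by simp only [Matrix.mul_assoc]
    _ = E * (F * E)⁻¹ * F := by
      rw [nonsing_inv_mul _ ((isUnit_iff_isUnit_det _).mp hFE), Matrix.mul_one]

theorem obliqueProjection_mul_obliqueProjection_eq_zero
    (E : Matrix m k R) {F : Matrix k m R} {E' : Matrix m l R} (F' : Matrix l m R)
    (hFE' : F * E' = 0) : obliqueProjection E F * obliqueProjection E' F' = 0 :=
  calc E * (F * E)⁻¹ * F * (E' * (F' * E')⁻¹ * F')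
      = E * (F * E)⁻¹ * (F * E') * (F' * E')⁻¹ * F' := by simp only [Matrix.mul_assoc]
    _ = 0 := by simp only [hFE', Matrix.mul_zero, Matrix.zero_mul]

theorem orthogonalIdempotents_obliqueProjection [DecidableEq m] {κ : ι → Type*}
    [∀ i, Fintype (κ i)] [∀ i, DecidableEq (κ i)]
    {E : ∀ i, Matrix m (κ i) R} {F : ∀ i, Matrix (κ i) m R}
    (hunit : ∀ i, IsUnit (F i * E i)) (horth : ∀ i j, i ≠ j → F i * E j = 0) :
    OrthogonalIdempotents fun i => obliqueProjection (E i) (F i) where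
  idem i := isIdempotentElem_obliqueProjection (hunit i)
  ortho i j hij := obliqueProjection_mul_obliqueProjection_eq_zero (E i) (F j) (horth i j hij)

end ObliqueProjection

theorem sDelta_inv_mul_S_idempotent_general {R m p ι : Type*} [CommRing R]
    [Fintype m] [Fintype p] [Fintype ι]
    {κ : ι → Type*} [∀ i, Fintype (κ i)] [∀ i, DecidableEq (κ i)]
    (S : Matrix p m R) (E : ∀ i, Matrix m (κ i) R) (F : ∀ i, Matrix (κ i) p R)
    (hunit : ∀ i, IsUnit (F i * S * E i)) (horth : ∀ i j, i ≠ j → F i * S * E j = 0) :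
    IsIdempotentElem ((∑ i, E i * (F i * S * E i)⁻¹ * F i) * S) := by
  classical
  have sum_mul_eq_sum_obliqueProjection : (∑ i, E i * (F i * S * E i)⁻¹ * F i) * S =
      ∑ i, obliqueProjection (E i) (F i * S) := by
    simp only [obliqueProjection, Matrix.sum_mul, Matrix.mul_assoc]
  rw [sum_mul_eq_sum_obliqueProjection]
  exact (orthogonalIdempotents_obliqueProjection hunit horth).isIdempotentElem_sum

/-- Let `S` be symmetric positive definite and `E i` full-column-rank matrices
with cross-orthogonality `Eᵢᵀ S Eⱼ = 0` for `i ≠ j`.  Then with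
`S_Δ⁻ := ∑ i, Eᵢ (Eᵢᵀ S Eᵢ)⁻¹ Eᵢᵀ`, the matrix `S_Δ⁻ S` is idempotent. -/
theorem sDelta_inv_mul_S_idempotent {n N : ℕ} (S : Matrix (Fin n) (Fin n) ℝ)
    (hS : S.PosDef) (ni : Fin N → ℕ)
    (E : ∀ i : Fin N, Matrix (Fin n) (Fin (ni i)) ℝ)
    (hrank : ∀ i, Function.Injective (E i).mulVec)
    (horth : ∀ i j, i ≠ j → (E i)ᵀ * S * E j = 0) :
    ((∑ i, E i * ((E i)ᵀ * S * E i)⁻¹ * (E i)ᵀ) * S) *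
        ((∑ i, E i * ((E i)ᵀ * S * E i)⁻¹ * (E i)ᵀ) * S) =
      (∑ i, E i * ((E i)ᵀ * S * E i)⁻¹ * (E i)ᵀ) * S :=
  sDelta_inv_mul_S_idempotent_general S E (fun i => (E i)ᵀ) (fun i => by
    simpa only [conjTranspose_eq_transpose_of_trivial] using
      (hS.conjTranspose_mul_mul_same (hrank i)).isUnit) horth
end

section
/- Let S be a symmetric positive definite real n×n matrix, let E₁, …, E_N be real n×nᵢ matrices and E_Π a real n×p matrix such that the n×n matrix obtained by concatenating the columns of E₁, …, E_N, E_Π is invertible (so n = n₁ + ⋯ + n_N + p and the column spaces form a direct-sum decomposition of ℝⁿ), and assume Eᵢᵀ S Eⱼ = 0 for all i ≠ j. Define S_Δ⁻ := Σ_{i=1}^{N} Eᵢ (Eᵢᵀ S Eᵢ)⁻¹ Eᵢᵀ and R_Π := E_Π − S_Δ⁻ S E_Π. Then R_Π has full column rank and F := R_Πᵀ S R_Π is a symmetric positive definite p×p matrix. -/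
open Matrix Finset

/-!
Each column of `S_Δ⁻ S E_Π` is a combination of the columns of the `Eᵢ`, so `R_Π v` is the
concatenated matrix `[E₁ ⋯ E_N E_Π]` applied to a vector whose last block is `v`. Injectivity of
that matrix therefore recovers `v` from `R_Π v`, and congruence by an injective matrix preserves
positive definiteness.
-/

section ConcatenatedBlocks

variable {R ι l m q : Type*} {κ : ι → Type*}

/-- The block row `[E₁ ⋯ E_N]`: the columns of all the matrices `E i` side by side, indexed by
pairs of a block and a column of that block. It is the `Σ`-indexed version of `Matrix.fromCols`. -/
def sigmaCols (E : ∀ i, Matrix m (κ i) R) : Matrix m (Σ i, κ i) R :=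
  of fun r s => E s.1 r s.2

/-- The block column with blocks `X i`, stacked along the same index type as in `sigmaCols`, so
that the two can be multiplied. It is the `Σ`-indexed version of `Matrix.fromRows`. -/
def sigmaRows (X : ∀ i, Matrix (κ i) q R) : Matrix (Σ i, κ i) q R :=
  of fun s c => X s.1 s.2 c

theorem sigmaCols_mul_sigmaRows [NonUnitalNonAssocSemiring R] [Fintype ι] [∀ i, Fintype (κ i)]
    (E : ∀ i, Matrix m (κ i) R) (X : ∀ i, Matrix (κ i) q R) :
    sigmaCols E * sigmaRows X = ∑ i, E i * X i := by
  ext r c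
  simp only [mul_apply, Matrix.sum_apply, sigmaCols, sigmaRows, of_apply, Fintype.sum_sigma]

theorem mulVec_injective_sub_mul_of_fromCols [Ring R] [Fintype l] [Fintype q]
    {A : Matrix m l R} {B : Matrix m q R} (hAB : Function.Injective (fromCols A B).mulVec)
    (X : Matrix l q R) : Function.Injective (B - A * X).mulVec := by
  have mulVec_eq (v : q → R) :
      (B - A * X) *ᵥ v = fromCols A B *ᵥ Sum.elim (-(X *ᵥ v)) v := by
    rw [fromCols_mulVec_sumElim, mulVec_neg, mulVec_mulVec, sub_mulVec, neg_add_eq_sub]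
  intro v w hvw
  rw [mulVec_eq, mulVec_eq] at hvw
  exact congrArg (· ∘ Sum.inr) (hAB hvw)

theorem mulVec_injective_sub_sum_mul_of_sigmaCols [Ring R] [Fintype ι] [∀ i, Fintype (κ i)]
    [Fintype q] {E : ∀ i, Matrix m (κ i) R} {B : Matrix m q R}
    (hEB : Function.Injective (fromCols (sigmaCols E) B).mulVec) (X : ∀ i, Matrix (κ i) q R) :
    Function.Injective (B - ∑ i, E i * X i).mulVec := by
  rw [← sigmaCols_mul_sigmaRows]
  exact mulVec_injective_sub_mul_of_fromCols hEB (sigmaRows X)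

end ConcatenatedBlocks

open scoped ComplexOrder in
theorem rPi_full_rank_and_F_posDef_general {𝕜 ι m q : Type*} {κ : ι → Type*} [RCLike 𝕜]
    [Fintype ι] [Fintype m] [Fintype q] [∀ i, Fintype (κ i)] [∀ i, DecidableEq (κ i)]
    {S : Matrix m m 𝕜} (hS : S.PosDef) {E : ∀ i, Matrix m (κ i) 𝕜} {EPi : Matrix m q 𝕜}
    (hEPi : Function.Injective (fromCols (sigmaCols E) EPi).mulVec)
    {SDelta : Matrix m m 𝕜} {RPi : Matrix m q 𝕜}
    (hSDelta : SDelta = ∑ i, E i * ((E i)ᴴ * S * E i)⁻¹ * (E i)ᴴ)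
    (hRPi : RPi = EPi - SDelta * S * EPi) :
    Function.Injective RPi.mulVec ∧ (RPiᴴ * S * RPi).PosDef := by
  have hRPi_sum : RPi = EPi - ∑ i, E i * (((E i)ᴴ * S * E i)⁻¹ * (E i)ᴴ * S * EPi) := by
    simp only [hRPi, hSDelta, Matrix.sum_mul, Matrix.mul_assoc]
  have hinj : Function.Injective RPi.mulVec :=
    hRPi_sum ▸ mulVec_injective_sub_sum_mul_of_sigmaCols hEPi _
  exact ⟨hinj, hS.conjTranspose_mul_mul_same hinj⟩

/-- Let `S` be symmetric positive definite, `E i` (`i = 1, …, N`) and `E_Π`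
matrices whose columns, concatenated, form an invertible `n × n` matrix (the
concatenated matrix is encoded as a matrix indexed by `(Σ i, Fin (ni i)) ⊕ Fin p`,
and its invertibility as the bijectivity of the associated linear map), with
`Eᵢᵀ S Eⱼ = 0` for `i ≠ j`.  Then `R_Π := E_Π - S_Δ⁻ S E_Π` has full column rank
and `F := R_Πᵀ S R_Π` is symmetric positive definite. -/
theorem rPi_full_rank_and_F_posDef {n N p : ℕ} (S : Matrix (Fin n) (Fin n) ℝ)
    (hS : S.PosDef) (ni : Fin N → ℕ)
    (E : ∀ i : Fin N, Matrix (Fin n) (Fin (ni i)) ℝ)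
    (EPi : Matrix (Fin n) (Fin p) ℝ)
    (C : Matrix (Fin n) ((Σ i : Fin N, Fin (ni i)) ⊕ Fin p) ℝ)
    (hC : C = Matrix.of fun r j =>
      Sum.elim (fun s : Σ i : Fin N, Fin (ni i) => E s.1 r s.2) (fun k => EPi r k) j)
    (hCinv : Function.Bijective C.mulVec)
    (horth : ∀ i j, i ≠ j → (E i)ᵀ * S * E j = 0)
    (SDelta RPi : _)
    (hSDelta : SDelta = ∑ i, E i * ((E i)ᵀ * S * E i)⁻¹ * (E i)ᵀ)
    (hRPi : RPi = EPi - SDelta * S * EPi) :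
    Function.Injective RPi.mulVec ∧ (RPiᵀ * S * RPi).PosDef := by
  subst hC
  simp only [← conjTranspose_eq_transpose_of_trivial] at hSDelta ⊢
  exact rPi_full_rank_and_F_posDef_general hS hCinv.injective hSDelta hRPi
end

section
/- Let S be a symmetric positive definite real n×n matrix, let E₁, …, E_N be real n×nᵢ matrices and E_Π a real n×p matrix such that the concatenation of their columns forms an invertible n×n matrix, with Eᵢᵀ S Eⱼ = 0 for all i ≠ j. Let R₁, …, R_N (of sizes nᵢ×n) and R_Π (of size p×n) be the unique matrices satisfying Rᵢ Eⱼ = δᵢⱼ I, Rᵢ E_Π = 0, R_Π Eᵢ = 0, and R_Π E_Π = I (the dual projections onto the direct summands). Let Q₁, …, Q_N be arbitrary real m×nᵢ matrices and Ê_Π an arbitrary real m×p matrix. Define S_Δ⁻ := Σ_{i=1}^{N} Eᵢ (Eᵢᵀ S Eᵢ)⁻¹ Eᵢᵀ, F := E_Πᵀ S E_Π − E_Πᵀ S S_Δ⁻ S E_Π (assumed invertible), R₀ := Ê_Πᵀ − Σ_{i=1}^{N} E_Πᵀ S Eᵢ (Eᵢᵀ S Eᵢ)⁻¹ Qᵢᵀ,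 and E_D := Σ_{i=1}^{N} Qᵢ Rᵢ + Ê_Π R_Π. Then E_D S⁻¹ E_Dᵀ = Σ_{i=1}^{N} Qᵢ (Eᵢᵀ S Eᵢ)⁻¹ Qᵢᵀ + R₀ᵀ F⁻¹ R₀. -/
open Matrix Finset

/-!
Subtracting from `E_Π` its `S`-orthogonal projection onto the ranges of the `Eᵢ` gives
`W = E_Π - S_Δ⁻ S E_Π`, which is `S`-orthogonal to every `Eᵢ` and satisfies `Wᵀ S E_Π = F`.
Hence `(S_Δ⁻ + W F⁻¹ Wᵀ) S` fixes all columns of the `Eᵢ` and of `E_Π`. As these span the whole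
space, `S⁻¹ = S_Δ⁻ + W F⁻¹ Wᵀ`. Finally `E_D` maps `Eᵢ` to `Qᵢ` and `E_Π` to `Ê_Π`, and therefore
`W` to `R₀ᵀ`.
-/

namespace BDDC

variable {ι l m n p 𝕜 : Type*} {κ : ι → Type*} [CommRing 𝕜]

section Concatenation

/-- The concatenation `[E₁ ⋯ E_N E_Π]` of the columns of a family of matrices and one
further matrix; surjectivity of its action on vectors says that these columns span. -/
def concatCols (E : ∀ i, Matrix n (κ i) 𝕜) (EPi : Matrix n p 𝕜) :
    Matrix n ((Σ i, κ i) ⊕ p) 𝕜 :=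
  fromCols (of fun r s => E s.1 r s.2) EPi

variable {E : ∀ i, Matrix n (κ i) 𝕜} {EPi : Matrix n p 𝕜}

theorem mul_concatCols [Fintype n] (X : Matrix l n 𝕜) :
    X * concatCols E EPi = concatCols (fun i => X * E i) (X * EPi) :=
  mul_fromCols X _ EPi

theorem eq_of_mul_eq_of_surjective_concatCols [Fintype ι] [∀ i, Fintype (κ i)] [Fintype n]
    [Fintype p] {X Y : Matrix l n 𝕜} (hspan : Function.Surjective (concatCols E EPi).mulVec)
    (hE : ∀ i, X * E i = Y * E i) (hEPi : X * EPi = Y * EPi) : X = Y := by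
  have hXY : X * concatCols E EPi = Y * concatCols E EPi := by
    simp only [mul_concatCols, hE, hEPi]
  refine mulVec_injective (funext fun v => ?_)
  obtain ⟨w, rfl⟩ := hspan v
  rw [mulVec_mulVec, mulVec_mulVec, hXY]

end Concatenation

section LocalInverse

variable [Fintype ι] [∀ i, Fintype (κ i)] [∀ i, DecidableEq (κ i)] [Fintype n]

/-- The sum `S_Δ⁻ = ∑ i, Eᵢ (Eᵢᵀ S Eᵢ)⁻¹ Eᵢᵀ` of the local solves. A singular block
`Eᵢᵀ S Eᵢ` contributes `0`, by the convention for `Matrix.inv`. -/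
noncomputable def localInverse (S : Matrix n n 𝕜) (E : ∀ i, Matrix n (κ i) 𝕜) : Matrix n n 𝕜 :=
  ∑ i, E i * ((E i)ᵀ * S * E i)⁻¹ * (E i)ᵀ

variable {S : Matrix n n 𝕜} {E : ∀ i, Matrix n (κ i) 𝕜}

theorem isSymm_localInverse (hS : S.IsSymm) : (localInverse S E).IsSymm := by
  have isSymm_block (i : ι) : ((E i)ᵀ * S * E i).IsSymm := by
    simp only [IsSymm, transpose_mul, transpose_transpose, hS.eq, Matrix.mul_assoc]
  simp only [IsSymm, localInverse, transpose_sum]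
  refine sum_congr rfl fun i _ => ?_
  rw [transpose_mul, transpose_mul, transpose_transpose, (isSymm_block i).inv.eq,
    ← Matrix.mul_assoc]

theorem localInverse_mul_mul_local {j : ι} (hK : IsUnit ((E j)ᵀ * S * E j))
    (horth : ∀ i, i ≠ j → (E i)ᵀ * S * E j = 0) :
    localInverse S E * (S * E j) = E j := by
  have term_eq (i : ι) : E i * ((E i)ᵀ * S * E i)⁻¹ * (E i)ᵀ * (S * E j) =
      E i * (((E i)ᵀ * S * E i)⁻¹ * ((E i)ᵀ * S * E j)) := by
    simp only [Matrix.mul_assoc]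
  simp only [localInverse, Matrix.sum_mul, term_eq]
  rw [Fintype.sum_eq_single j fun i hij => by rw [horth i hij, Matrix.mul_zero, Matrix.mul_zero],
    nonsing_inv_mul _ ((isUnit_iff_isUnit_det _).1 hK), Matrix.mul_one]

end LocalInverse

section Primal

variable [Fintype ι] [∀ i, Fintype (κ i)] [∀ i, DecidableEq (κ i)] [Fintype n]

/-- The primal basis `W = E_Π - S_Δ⁻ S E_Π`, obtained from `E_Π` by removing its `S`-orthogonal
projection onto the ranges of the `Eᵢ`. -/
noncomputable def primalBasis (S : Matrix n n 𝕜) (E : ∀ i, Matrix n (κ i) 𝕜)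
    (EPi : Matrix n p 𝕜) : Matrix n p 𝕜 :=
  EPi - localInverse S E * (S * EPi)

/-- The primal Schur complement `F = E_Πᵀ S E_Π - E_Πᵀ S S_Δ⁻ S E_Π`, the coarse matrix of the
preconditioner. -/
noncomputable def primalSchur (S : Matrix n n 𝕜) (E : ∀ i, Matrix n (κ i) 𝕜)
    (EPi : Matrix n p 𝕜) : Matrix p p 𝕜 :=
  EPiᵀ * S * EPi - EPiᵀ * S * localInverse S E * S * EPi

/-- The coarse restriction `R₀ = Ê_Πᵀ - ∑ i, E_Πᵀ S Eᵢ (Eᵢᵀ S Eᵢ)⁻¹ Qᵢᵀ`, whose transpose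
prolongs the coarse correction. -/
noncomputable def coarseRestriction (S : Matrix n n 𝕜) (E : ∀ i, Matrix n (κ i) 𝕜)
    (EPi : Matrix n p 𝕜) (Q : ∀ i, Matrix m (κ i) 𝕜) (EhatPi : Matrix m p 𝕜) : Matrix p m 𝕜 :=
  EhatPiᵀ - ∑ i, EPiᵀ * S * E i * ((E i)ᵀ * S * E i)⁻¹ * (Q i)ᵀ

variable {S : Matrix n n 𝕜} {E : ∀ i, Matrix n (κ i) 𝕜} {EPi : Matrix n p 𝕜}

theorem transpose_primalBasis (hS : S.IsSymm) :
    (primalBasis S E EPi)ᵀ = EPiᵀ - EPiᵀ * S * localInverse S E := by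
  simp only [primalBasis, transpose_sub, transpose_mul, hS.eq, (isSymm_localInverse hS).eq]

theorem transpose_primalBasis_mul_mul_local (hS : S.IsSymm) {j : ι}
    (hK : IsUnit ((E j)ᵀ * S * E j)) (horth : ∀ i, i ≠ j → (E i)ᵀ * S * E j = 0) :
    (primalBasis S E EPi)ᵀ * (S * E j) = 0 := by
  rw [transpose_primalBasis hS, Matrix.sub_mul, Matrix.mul_assoc (EPiᵀ * S),
    localInverse_mul_mul_local hK horth, Matrix.mul_assoc, sub_self]

theorem transpose_primalBasis_mul_mul_primal (hS : S.IsSymm) :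
    (primalBasis S E EPi)ᵀ * (S * EPi) = primalSchur S E EPi := by
  simp only [transpose_primalBasis hS, primalSchur, Matrix.sub_mul, Matrix.mul_assoc]

theorem transpose_primalBasis_mul_transpose (hS : S.IsSymm) (D : Matrix m n 𝕜) :
    (primalBasis S E EPi)ᵀ * Dᵀ =
      coarseRestriction S E EPi (fun i => D * E i) (D * EPi) := by
  simp only [transpose_primalBasis hS, coarseRestriction, localInverse, Matrix.sub_mul,
    Matrix.mul_sum, Matrix.sum_mul, transpose_mul, Matrix.mul_assoc]

theorem inv_eq_localInverse_add_primal [DecidableEq n] [Fintype p] [DecidableEq p] (hS : S.IsSymm)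
    (hK : ∀ i, IsUnit ((E i)ᵀ * S * E i)) (horth : ∀ i j, i ≠ j → (E i)ᵀ * S * E j = 0)
    (hspan : Function.Surjective (concatCols E EPi).mulVec)
    (hF : IsUnit (primalSchur S E EPi)) :
    S⁻¹ = localInverse S E +
      primalBasis S E EPi * (primalSchur S E EPi)⁻¹ * (primalBasis S E EPi)ᵀ := by
  refine inv_eq_left_inv (eq_of_mul_eq_of_surjective_concatCols hspan (fun j => ?_) ?_)
  · rw [Matrix.mul_assoc, Matrix.add_mul, localInverse_mul_mul_local (hK j) (horth · j),
      Matrix.mul_assoc, transpose_primalBasis_mul_mul_local hS (hK j) (horth · j),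
      Matrix.mul_zero, add_zero, Matrix.one_mul]
  · rw [Matrix.mul_assoc, Matrix.add_mul, Matrix.mul_assoc (_ * _),
      transpose_primalBasis_mul_mul_primal hS, Matrix.mul_assoc,
      nonsing_inv_mul _ ((isUnit_iff_isUnit_det _).1 hF), Matrix.mul_one, primalBasis,
      add_sub_cancel, Matrix.one_mul]

theorem mul_localInverse_mul_transpose (D : Matrix m n 𝕜) :
    D * localInverse S E * Dᵀ =
      ∑ i, (D * E i) * ((E i)ᵀ * S * E i)⁻¹ * (D * E i)ᵀ := by
  simp only [localInverse, Matrix.mul_sum, Matrix.sum_mul, transpose_mul, Matrix.mul_assoc]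

theorem mul_inv_mul_transpose_eq_sum_add [DecidableEq n] [Fintype p] [DecidableEq p] (hS : S.IsSymm)
    (hK : ∀ i, IsUnit ((E i)ᵀ * S * E i)) (horth : ∀ i j, i ≠ j → (E i)ᵀ * S * E j = 0)
    (hspan : Function.Surjective (concatCols E EPi).mulVec)
    (hF : IsUnit (primalSchur S E EPi)) (D : Matrix m n 𝕜) :
    D * S⁻¹ * Dᵀ =
      (∑ i, (D * E i) * ((E i)ᵀ * S * E i)⁻¹ * (D * E i)ᵀ) +
        (coarseRestriction S E EPi (fun i => D * E i) (D * EPi))ᵀ * (primalSchur S E EPi)⁻¹ *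
          coarseRestriction S E EPi (fun i => D * E i) (D * EPi) := by
  rw [inv_eq_localInverse_add_primal hS hK horth hspan hF, Matrix.mul_add, Matrix.add_mul,
    mul_localInverse_mul_transpose, ← transpose_primalBasis_mul_transpose hS]
  simp only [transpose_mul, transpose_transpose, Matrix.mul_assoc]

end Primal

section Extension

variable [Fintype ι] [∀ i, Fintype (κ i)] [Fintype p]

/-- The operator `E_D = ∑ i, Qᵢ Rᵢ + Ê_Π R_Π`, which replaces the local bases `Eᵢ` by `Qᵢ` and the
primal basis `E_Π` by `Ê_Π` when the `Rᵢ` and `R_Π` are the dual projections. -/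
def extension (Q : ∀ i, Matrix m (κ i) 𝕜) (EhatPi : Matrix m p 𝕜)
    (R : ∀ i, Matrix (κ i) n 𝕜) (RPi : Matrix p n 𝕜) : Matrix m n 𝕜 :=
  (∑ i, Q i * R i) + EhatPi * RPi

variable [Fintype n] {Q : ∀ i, Matrix m (κ i) 𝕜} {EhatPi : Matrix m p 𝕜}
  {R : ∀ i, Matrix (κ i) n 𝕜} {RPi : Matrix p n 𝕜}

theorem extension_mul_local [∀ i, DecidableEq (κ i)] {E : ∀ i, Matrix n (κ i) 𝕜} {j : ι}
    (hRE : R j * E j = 1) (hRE' : ∀ i, i ≠ j → R i * E j = 0) (hRPiE : RPi * E j = 0) :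
    extension Q EhatPi R RPi * E j = Q j := by
  simp only [extension, Matrix.add_mul, Matrix.sum_mul, Matrix.mul_assoc, hRPiE, Matrix.mul_zero,
    add_zero]
  rw [Fintype.sum_eq_single j fun i hij => by rw [hRE' i hij, Matrix.mul_zero], hRE,
    Matrix.mul_one]

theorem extension_mul_primal [DecidableEq p] {EPi : Matrix n p 𝕜} (hREPi : ∀ i, R i * EPi = 0)
    (hRPiEPi : RPi * EPi = 1) : extension Q EhatPi R RPi * EPi = EhatPi := by
  simp only [extension, Matrix.add_mul, Matrix.sum_mul, Matrix.mul_assoc, hREPi, hRPiEPi,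
    Matrix.mul_zero, sum_const_zero, zero_add, Matrix.mul_one]

end Extension

theorem isUnit_transpose_mul_mul_of_posDef [Fintype n] [Fintype p] [DecidableEq p]
    {S : Matrix n n ℝ} (hS : S.PosDef) {E : Matrix n p ℝ} {R : Matrix p n ℝ} (hRE : R * E = 1) :
    IsUnit (Eᵀ * S * E) := by
  have injective_mulVec : Function.Injective E.mulVec :=
    Function.LeftInverse.injective (g := R.mulVec) fun x => by
      rw [mulVec_mulVec, hRE, one_mulVec]
  simpa only [conjTranspose_eq_transpose_of_trivial] using
    (hS.conjTranspose_mul_mul_same injective_mulVec).isUnit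

end BDDC

open BDDC in
theorem bddc_preconditioner_concise_form_general {ι m n p 𝕜 : Type*} {κ : ι → Type*}
    [CommRing 𝕜] [Fintype ι] [∀ i, Fintype (κ i)] [∀ i, DecidableEq (κ i)] [Fintype n]
    [DecidableEq n] [Fintype p] [DecidableEq p]
    {S : Matrix n n 𝕜} (hS : S.IsSymm) {E : ∀ i, Matrix n (κ i) 𝕜} {EPi : Matrix n p 𝕜}
    (hK : ∀ i, IsUnit ((E i)ᵀ * S * E i)) (hspan : Function.Surjective (concatCols E EPi).mulVec)
    (horth : ∀ i j, i ≠ j → (E i)ᵀ * S * E j = 0)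
    {R : ∀ i, Matrix (κ i) n 𝕜} {RPi : Matrix p n 𝕜}
    (hRE : ∀ i, R i * E i = 1) (hRE' : ∀ i j, i ≠ j → R i * E j = 0)
    (hREPi : ∀ i, R i * EPi = 0) (hRPiE : ∀ i, RPi * E i = 0) (hRPiEPi : RPi * EPi = 1)
    (Q : ∀ i, Matrix m (κ i) 𝕜) (EhatPi : Matrix m p 𝕜) (hF : IsUnit (primalSchur S E EPi)) :
    extension Q EhatPi R RPi * S⁻¹ * (extension Q EhatPi R RPi)ᵀ =
      (∑ i, Q i * ((E i)ᵀ * S * E i)⁻¹ * (Q i)ᵀ) +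
        (coarseRestriction S E EPi Q EhatPi)ᵀ * (primalSchur S E EPi)⁻¹ *
          coarseRestriction S E EPi Q EhatPi := by
  have extension_mul (j : ι) : extension Q EhatPi R RPi * E j = Q j :=
    extension_mul_local (hRE j) (hRE' · j) (hRPiE j)
  simpa only [extension_mul, extension_mul_primal hREPi hRPiEPi] using
    mul_inv_mul_transpose_eq_sum_add hS hK horth hspan hF (extension Q EhatPi R RPi)

/-- Concise form of the BDDC preconditioner:
`E_D S⁻¹ E_Dᵀ = ∑ i, Qᵢ (Eᵢᵀ S Eᵢ)⁻¹ Qᵢᵀ + R₀ᵀ F⁻¹ R₀`, where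
`E_D = ∑ i, Qᵢ Rᵢ + Ê_Π R_Π`,
`R₀ = Ê_Πᵀ - ∑ i, E_Πᵀ S Eᵢ (Eᵢᵀ S Eᵢ)⁻¹ Qᵢᵀ`, and
`F = E_Πᵀ S E_Π - E_Πᵀ S S_Δ⁻ S E_Π` (assumed invertible), under the
direct-sum decomposition given by the columns of `E₁, …, E_N, E_Π`, the
cross-orthogonality `Eᵢᵀ S Eⱼ = 0` for `i ≠ j`, and the dual projections
`Rᵢ, R_Π`. -/
theorem bddc_preconditioner_concise_form {n N p m : ℕ}
    (S : Matrix (Fin n) (Fin n) ℝ) (hS : S.PosDef) (ni : Fin N → ℕ)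
    (E : ∀ i : Fin N, Matrix (Fin n) (Fin (ni i)) ℝ)
    (EPi : Matrix (Fin n) (Fin p) ℝ)
    (C : Matrix (Fin n) ((Σ i : Fin N, Fin (ni i)) ⊕ Fin p) ℝ)
    (hC : C = Matrix.of fun r j =>
      Sum.elim (fun s : Σ i : Fin N, Fin (ni i) => E s.1 r s.2) (fun k => EPi r k) j)
    (hCinv : Function.Bijective C.mulVec)
    (horth : ∀ i j, i ≠ j → (E i)ᵀ * S * E j = 0)
    (R : ∀ i : Fin N, Matrix (Fin (ni i)) (Fin n) ℝ)
    (RPi : Matrix (Fin p) (Fin n) ℝ)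
    (hRE : ∀ i, R i * E i = 1)
    (hRE' : ∀ i j, i ≠ j → R i * E j = 0)
    (hREPi : ∀ i, R i * EPi = 0)
    (hRPiE : ∀ i, RPi * E i = 0)
    (hRPiEPi : RPi * EPi = 1)
    (Q : ∀ i : Fin N, Matrix (Fin m) (Fin (ni i)) ℝ)
    (EhatPi : Matrix (Fin m) (Fin p) ℝ)
    (SDelta F R0 ED : _)
    (hSDelta : SDelta = ∑ i, E i * ((E i)ᵀ * S * E i)⁻¹ * (E i)ᵀ)
    (hF : F = EPiᵀ * S * EPi - EPiᵀ * S * SDelta * S * EPi)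
    (hFinv : IsUnit F)
    (hR0 : R0 = EhatPiᵀ - ∑ i, EPiᵀ * S * E i * ((E i)ᵀ * S * E i)⁻¹ * (Q i)ᵀ)
    (hED : ED = (∑ i, Q i * R i) + EhatPi * RPi) :
    ED * S⁻¹ * EDᵀ =
      (∑ i, Q i * ((E i)ᵀ * S * E i)⁻¹ * (Q i)ᵀ) + R0ᵀ * F⁻¹ * R0 := by
  subst hC hSDelta hF hR0 hED
  exact bddc_preconditioner_concise_form_general (isHermitian_iff_isSymm.1 hS.isHermitian)
    (fun i => BDDC.isUnit_transpose_mul_mul_of_posDef hS (hRE i)) hCinv.surjective horth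
    hRE hRE' hREPi hRPiE hRPiEPi Q EhatPi hFinv
end

section
/- Let S̃ be a symmetric positive definite real n×n matrix, let R be a real n×m matrix of full column rank, and let E be a real m×n matrix satisfying E R = I_m. Define Ŝ := Rᵀ S̃ R and M⁻¹ := E S̃⁻¹ Eᵀ. Then every eigenvalue of the preconditioned matrix M⁻¹ Ŝ = E S̃⁻¹ Eᵀ Rᵀ S̃ R is real and greater than or equal to 1; that is, if v ∈ ℝᵐ is nonzero and (E S̃⁻¹ Eᵀ)(Rᵀ S̃ R) v = μ v for some μ ∈ ℝ, then μ ≥ 1. -/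
open Matrix

/-!
Write `Ŝ = Rᴴ S̃ R`. Since `E R = 1`, completing the square gives
`E S̃⁻¹ Eᴴ - Ŝ⁻¹ = X S̃⁻¹ Xᴴ` with `X = E - Ŝ⁻¹ Rᴴ S̃`, so `Ŝ⁻¹ ≤ E S̃⁻¹ Eᴴ` in the Loewner order;
this is the Gauss–Markov inequality for the linear unbiased estimator `E`. Testing it on `Ŝ v`, for
an eigenvector `v` with eigenvalue `μ`, yields `⟨v, Ŝ v⟩ ≤ μ ⟨v, Ŝ v⟩`, and `⟨v, Ŝ v⟩ > 0`.
-/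

theorem mulVec_injective_of_mul_eq_one {m n K : Type*} [Fintype m] [Fintype n] [DecidableEq m]
    [Semiring K] {E : Matrix m n K} {R : Matrix n m K} (hER : E * R = 1) :
    Function.Injective R.mulVec :=
  Function.LeftInverse.injective (g := E.mulVec) fun v => by
    rw [mulVec_mulVec, hER, one_mulVec]

section

variable {m n K : Type*} [Fintype m] [Fintype n] [DecidableEq m] [DecidableEq n]

theorem mul_inv_mul_conjTranspose_sub_inv_eq [CommRing K] [StarRing K]
    {S : Matrix n n K} {R : Matrix n m K} {E : Matrix m n K}
    (hS : S.IsHermitian) (hSu : IsUnit S) (hu : IsUnit (Rᴴ * S * R)) (hER : E * R = 1) :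
    E * S⁻¹ * Eᴴ - (Rᴴ * S * R)⁻¹ =
      (E - (Rᴴ * S * R)⁻¹ * Rᴴ * S) * S⁻¹ * (E - (Rᴴ * S * R)⁻¹ * Rᴴ * S)ᴴ := by
  have hSdet : IsUnit S.det := (isUnit_iff_isUnit_det S).mp hSu
  have hRE : Rᴴ * Eᴴ = 1 := by rw [← conjTranspose_mul, hER, conjTranspose_one]
  have hQ : (Rᴴ * S * R).IsHermitian := isHermitian_conjTranspose_mul_mul R hS
  set Q := Rᴴ * S * R with hQ_def
  have hX : (E - Q⁻¹ * Rᴴ * S)ᴴ = Eᴴ - S * R * Q⁻¹ := by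
    simp only [conjTranspose_sub, conjTranspose_mul, conjTranspose_conjTranspose, hS.eq,
      hQ.inv.eq, Matrix.mul_assoc]
  have hXS : (E - Q⁻¹ * Rᴴ * S) * S⁻¹ = E * S⁻¹ - Q⁻¹ * Rᴴ := by
    rw [Matrix.sub_mul, mul_nonsing_inv_cancel_right _ _ hSdet]
  have hESR : E * S⁻¹ * (S * R * Q⁻¹) = Q⁻¹ := by
    rw [Matrix.mul_assoc S, Matrix.mul_assoc E, nonsing_inv_mul_cancel_left _ _ hSdet,
      ← Matrix.mul_assoc, hER, Matrix.one_mul]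
  have hREQ : Q⁻¹ * Rᴴ * Eᴴ = Q⁻¹ := by rw [Matrix.mul_assoc, hRE, Matrix.mul_one]
  have hRSR : Q⁻¹ * Rᴴ * (S * R * Q⁻¹) = Q⁻¹ := by
    calc Q⁻¹ * Rᴴ * (S * R * Q⁻¹) = Q⁻¹ * Q * Q⁻¹ := by simp only [hQ_def, Matrix.mul_assoc]
      _ = Q⁻¹ := by
        rw [nonsing_inv_mul _ ((isUnit_iff_isUnit_det Q).mp hu), Matrix.one_mul]
  rw [hX, hXS, Matrix.sub_mul, Matrix.mul_sub, Matrix.mul_sub, hESR, hREQ, hRSR, sub_self, sub_zero]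

theorem posSemidef_mul_inv_mul_conjTranspose_sub_inv [Field K] [PartialOrder K] [StarRing K]
    {S : Matrix n n K} {R : Matrix n m K} {E : Matrix m n K} (hS : S.PosDef) (hER : E * R = 1) :
    (E * S⁻¹ * Eᴴ - (Rᴴ * S * R)⁻¹).PosSemidef := by
  rw [mul_inv_mul_conjTranspose_sub_inv_eq hS.isHermitian hS.isUnit
    (hS.conjTranspose_mul_mul_same (mulVec_injective_of_mul_eq_one hER)).isUnit hER]
  exact hS.posSemidef.inv.mul_mul_conjTranspose_same _

end

theorem one_le_of_mul_mulVec_eq_smul {n K : Type*} [Fintype n] [DecidableEq n]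
    [Field K] [PartialOrder K] [StarRing K] [AddLeftMono K] [MulPosReflectLE K]
    {P Q : Matrix n n K} (hQ : Q.PosDef) (hPQ : (P - Q⁻¹).PosSemidef)
    {μ : K} {v : n → K} (hv : v ≠ 0) (heig : (P * Q) *ᵥ v = μ • v) : 1 ≤ μ := by
  have hpos : 0 < star v ⬝ᵥ Q *ᵥ v := hQ.dotProduct_mulVec_pos hv
  have happly : (P - Q⁻¹) *ᵥ (Q *ᵥ v) = (μ - 1) • v := by
    rw [mulVec_mulVec, Matrix.sub_mul,
      nonsing_inv_mul _ ((isUnit_iff_isUnit_det Q).mp hQ.isUnit), sub_mulVec, heig, one_mulVec,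
      sub_smul, one_smul]
  have hadj : star (Q *ᵥ v) ⬝ᵥ v = star v ⬝ᵥ Q *ᵥ v := by
    rw [star_mulVec, hQ.isHermitian.eq, dotProduct_mulVec]
  have hnonneg : 0 ≤ (μ - 1) * (star v ⬝ᵥ Q *ᵥ v) := by
    calc 0 ≤ star (Q *ᵥ v) ⬝ᵥ (P - Q⁻¹) *ᵥ (Q *ᵥ v) := hPQ.dotProduct_mulVec_nonneg _
      _ = (μ - 1) * (star v ⬝ᵥ Q *ᵥ v) := by rw [happly, dotProduct_smul, smul_eq_mul, hadj]
  rw [sub_mul, sub_nonneg] at hnonneg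
  exact le_of_mul_le_mul_right hnonneg hpos

/-- Over `ℂ`, with the order of `ComplexOrder`, the conclusion also says that `μ` is real. -/
theorem bddc_min_eigenvalue_general {m n K : Type*} [Fintype m] [Fintype n] [DecidableEq m]
    [DecidableEq n] [Field K] [PartialOrder K] [StarRing K] [AddLeftMono K] [MulPosReflectLE K]
    {S : Matrix n n K} (hS : S.PosDef) {R : Matrix n m K} {E : Matrix m n K} (hER : E * R = 1)
    {μ : K} {v : m → K} (hv : v ≠ 0)
    (heig : ((E * S⁻¹ * Eᴴ) * (Rᴴ * S * R)) *ᵥ v = μ • v) : 1 ≤ μ :=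
  one_le_of_mul_mulVec_eq_smul (hS.conjTranspose_mul_mul_same (mulVec_injective_of_mul_eq_one hER))
    (posSemidef_mul_inv_mul_conjTranspose_sub_inv hS hER) hv heig

/-- Lower eigenvalue bound for the BDDC-preconditioned operator: if
`S̃` is symmetric positive definite, `R` has full column rank, `E R = I`, and
`μ` is a real eigenvalue of `(E S̃⁻¹ Eᵀ)(Rᵀ S̃ R)`, then `μ ≥ 1`. -/
theorem bddc_min_eigenvalue {n m : ℕ}
    (St : Matrix (Fin n) (Fin n) ℝ) (hSt : St.PosDef)
    (R : Matrix (Fin n) (Fin m) ℝ) (hR : Function.Injective R.mulVec)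
    (E : Matrix (Fin m) (Fin n) ℝ) (hER : E * R = 1)
    (μ : ℝ) (v : Fin m → ℝ) (hv : v ≠ 0)
    (heig : ((E * St⁻¹ * Eᵀ) * (Rᵀ * St * R)).mulVec v = μ • v) :
    1 ≤ μ :=
  bddc_min_eigenvalue_general hSt hER hv <| by
    simpa only [conjTranspose_eq_transpose_of_trivial] using heig
end

section
/- Let S̃ be a symmetric positive definite real n×n matrix, let R be a real n×m matrix of full column rank, let E be a real m×n matrix with E R = I_m, and let P := I_n − R E. Suppose K ≥ 1 is a real number such that (P w)ᵀ S̃ (P w) ≤ K · wᵀ S̃ w for all w ∈ ℝⁿ. Then every real eigenvalue μ of the preconditioned matrix Ĝ := (E S̃⁻¹ Eᵀ)(Rᵀ S̃ R) satisfies 1 ≤ μ ≤ K; in particular, for any two real eigenvalues μ₁, μ₂ of Ĝ one has μ₂/μ₁ ≤ K, so the condition number of Ĝ is bounded by K. -/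
open Matrix

/-!
Equip `𝕜ⁿ` with the inner product `⟪x, y⟫ = xᴴ S y` and let `Q = R E`, so that `P = 1 - Q`. Since
`E R = 1`, the matrix `R` carries eigenvectors of `Ĝ` to eigenvectors of `Q Q†` in the range of `Q`,
where `Q†` is the adjoint of `Q` for this inner product. If `Q u = u` and `Q Q† u = μ u`, the vector
`z = Q† u - u` satisfies `⟪z, z⟫ = (star μ - 1) ⟪u, u⟫` and `⟪P z, P z⟫ = μ ⟪z, z⟫`. The first
identity gives `1 ≤ μ`. The second gives `μ ≤ K` if `z ≠ 0`, and if `z = 0` then `μ u = Q u = u`.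
-/

section Forms

variable {n m α : Type*} [Fintype n] [CommRing α] [StarRing α]

/-- The sesquilinear form `xᴴ S y`, conjugate-linear in `x`; the inner product of the energy norm
when `S` is positive definite. -/
def energyInner (S : Matrix n n α) (x y : n → α) : α :=
  star x ⬝ᵥ S *ᵥ y

theorem star_energyInner {S : Matrix n n α} (hS : S.IsHermitian) (x y : n → α) :
    star (energyInner S x y) = energyInner S y x := by
  rw [energyInner, energyInner, ← star_dotProduct, star_mulVec, hS.eq, ← dotProduct_mulVec]

theorem energyInner_sub_smul_self (S : Matrix n n α) (c : α) (x y : n → α) :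
    energyInner S (x - c • y) (x - c • y) =
      energyInner S x x - c * energyInner S x y - star c * energyInner S y x +
        star c * c * energyInner S y y := by
  simp only [energyInner, star_sub, star_smul, mulVec_sub, mulVec_smul, sub_dotProduct,
    dotProduct_sub, smul_dotProduct, dotProduct_smul, smul_eq_mul]
  ring

variable [DecidableEq n]

/-- The adjoint of `Q` with respect to `energyInner S`. It relies on the inverse of `S`, so it is a
genuine adjoint only when `S` is invertible. -/
noncomputable def energyAdjoint (S Q : Matrix n n α) : Matrix n n α :=
  S⁻¹ * Qᴴ * S

theorem energyInner_energyAdjoint_mulVec {S : Matrix n n α} (hS : IsUnit S) (Q : Matrix n n α)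
    (x y : n → α) :
    energyInner S x (energyAdjoint S Q *ᵥ y) = energyInner S (Q *ᵥ x) y := by
  have hdet : IsUnit S.det := (isUnit_iff_isUnit_det S).mp hS
  rw [energyInner, energyInner, energyAdjoint, mulVec_mulVec, Matrix.mul_assoc,
    mul_nonsing_inv_cancel_left _ _ hdet, ← mulVec_mulVec, dotProduct_mulVec, ← star_mulVec]

section Eigenvector

variable {S Q : Matrix n n α} {μ : α} {u : n → α}

theorem energyInner_energyAdjoint_sub_smul_self (hS : S.IsHermitian) (hSunit : IsUnit S)
    (hQu : Q *ᵥ u = u) (hμ : (Q * energyAdjoint S Q) *ᵥ u = μ • u) (c : α) :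
    energyInner S (energyAdjoint S Q *ᵥ u - c • u) (energyAdjoint S Q *ᵥ u - c • u) =
      (star μ - c - star c + star c * c) * energyInner S u u := by
  set w := energyAdjoint S Q *ᵥ u with hw
  have hQw : Q *ᵥ w = μ • u := by rw [hw, mulVec_mulVec, hμ]
  have inner_w (x : n → α) : energyInner S x w = energyInner S (Q *ᵥ x) u :=
    energyInner_energyAdjoint_mulVec hSunit Q x u
  have inner_w_w : energyInner S w w = star μ * energyInner S u u := by
    rw [inner_w, hQw, energyInner, star_smul, smul_dotProduct, smul_eq_mul, energyInner]
  have inner_u_w : energyInner S u w = energyInner S u u := by rw [inner_w, hQu]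
  have inner_w_u : energyInner S w u = energyInner S u u := by
    rw [← star_energyInner hS, inner_u_w, star_energyInner hS]
  rw [energyInner_sub_smul_self, inner_w_w, inner_u_w, inner_w_u]
  ring

theorem energyInner_energyAdjoint_sub_self (hS : S.IsHermitian) (hSunit : IsUnit S)
    (hQu : Q *ᵥ u = u) (hμ : (Q * energyAdjoint S Q) *ᵥ u = μ • u) :
    energyInner S (energyAdjoint S Q *ᵥ u - u) (energyAdjoint S Q *ᵥ u - u) =
      (star μ - 1) * energyInner S u u := by
  simpa using energyInner_energyAdjoint_sub_smul_self hS hSunit hQu hμ 1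

theorem energyInner_one_sub_mulVec_energyAdjoint_sub_self (hS : S.IsHermitian) (hSunit : IsUnit S)
    (hQu : Q *ᵥ u = u) (hμ : (Q * energyAdjoint S Q) *ᵥ u = μ • u) :
    energyInner S ((1 - Q) *ᵥ (energyAdjoint S Q *ᵥ u - u))
        ((1 - Q) *ᵥ (energyAdjoint S Q *ᵥ u - u)) =
      μ * energyInner S (energyAdjoint S Q *ᵥ u - u) (energyAdjoint S Q *ᵥ u - u) := by
  have jump_eq : (1 - Q) *ᵥ (energyAdjoint S Q *ᵥ u - u) = energyAdjoint S Q *ᵥ u - μ • u := by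
    rw [sub_mulVec, one_mulVec, mulVec_sub, mulVec_mulVec, hμ, hQu]
    abel
  rw [jump_eq, energyInner_energyAdjoint_sub_smul_self hS hSunit hQu hμ,
    energyInner_energyAdjoint_sub_self hS hSunit hQu hμ]
  ring

end Eigenvector

variable [Fintype m]

/-- The BDDC-preconditioned operator `Ĝ`: the preconditioner `E S⁻¹ Eᴴ` applied to the assembled
matrix `Rᴴ S R`. -/
noncomputable def bddcOperator (S : Matrix n n α) (R : Matrix n m α) (E : Matrix m n α) :
    Matrix m m α :=
  (E * S⁻¹ * Eᴴ) * (Rᴴ * S * R)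

theorem mul_energyAdjoint_mul_eq_mul_bddcOperator (S : Matrix n n α) (R : Matrix n m α)
    (E : Matrix m n α) :
    R * E * energyAdjoint S (R * E) * R = R * bddcOperator S R E := by
  simp only [energyAdjoint, bddcOperator, conjTranspose_mul, Matrix.mul_assoc]

end Forms

section Order

variable {n m 𝕜 : Type*} [Fintype n] [DecidableEq n]
  [Field 𝕜] [PartialOrder 𝕜] [StarRing 𝕜] [StarOrderedRing 𝕜]

theorem inv_nonneg_of_pos_of_starOrderedRing {a : 𝕜} (ha : 0 < a) : 0 ≤ a⁻¹ := by
  have hstar : star a = a := ha.le.isSelfAdjoint.star_eq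
  simpa [star_inv₀, hstar, ha.ne'] using star_left_conjugate_nonneg ha.le a⁻¹

theorem mulPosReflectLE_of_starOrderedRing : MulPosReflectLE 𝕜 where
  elim := by
    rintro ⟨a, ha⟩ b c hbc
    simpa [ha.ne'] using
      mul_le_mul_of_nonneg_right hbc (inv_nonneg_of_pos_of_starOrderedRing ha)

section Eigenvector

variable {S Q : Matrix n n 𝕜} {μ : 𝕜} {u : n → 𝕜}

theorem one_le_of_mul_energyAdjoint_mulVec_eq_smul (hS : S.PosDef) (hu : u ≠ 0)
    (hQu : Q *ᵥ u = u) (hμ : (Q * energyAdjoint S Q) *ᵥ u = μ • u) : 1 ≤ μ := by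
  have := mulPosReflectLE_of_starOrderedRing (𝕜 := 𝕜)
  have energy_pos : 0 < energyInner S u u := hS.dotProduct_mulVec_pos hu
  have energy_le : 1 * energyInner S u u ≤ star μ * energyInner S u u := by
    rw [← sub_nonneg, ← sub_mul,
      ← energyInner_energyAdjoint_sub_self hS.isHermitian hS.isUnit hQu hμ]
    exact hS.posSemidef.dotProduct_mulVec_nonneg _
  exact one_le_star_iff.mp (le_of_mul_le_mul_right energy_le energy_pos)

theorem le_of_mul_energyAdjoint_mulVec_eq_smul (hS : S.PosDef) (hu : u ≠ 0)
    (hQu : Q *ᵥ u = u) (hμ : (Q * energyAdjoint S Q) *ᵥ u = μ • u) {K : 𝕜} (hK : 1 ≤ K)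
    (hQbound : ∀ w, energyInner S ((1 - Q) *ᵥ w) ((1 - Q) *ᵥ w) ≤ K * energyInner S w w) :
    μ ≤ K := by
  have := mulPosReflectLE_of_starOrderedRing (𝕜 := 𝕜)
  by_cases hz : energyAdjoint S Q *ᵥ u - u = 0
  · have hμu : μ • u = (1 : 𝕜) • u := by
      rw [← hμ, ← mulVec_mulVec, sub_eq_zero.mp hz, hQu, one_smul]
    exact (smul_left_injective 𝕜 hu hμu).trans_le hK
  · have hbound := hQbound (energyAdjoint S Q *ᵥ u - u)
    rw [energyInner_one_sub_mulVec_energyAdjoint_sub_self hS.isHermitian hS.isUnit hQu hμ] at hbound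
    exact le_of_mul_le_mul_right hbound (hS.dotProduct_mulVec_pos hz)

end Eigenvector

variable [Fintype m] [DecidableEq m] {S : Matrix n n 𝕜} {R : Matrix n m 𝕜} {E : Matrix m n 𝕜}

theorem mem_Icc_of_bddcOperator_mulVec_eq_smul (hS : S.PosDef) (hER : E * R = 1) {K : 𝕜}
    (hK : 1 ≤ K)
    (hPbound : ∀ w, energyInner S ((1 - R * E) *ᵥ w) ((1 - R * E) *ᵥ w) ≤ K * energyInner S w w)
    {μ : 𝕜} {v : m → 𝕜} (hv : v ≠ 0) (hμ : bddcOperator S R E *ᵥ v = μ • v) :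
    μ ∈ Set.Icc 1 K := by
  have hEu : E *ᵥ (R *ᵥ v) = v := by rw [mulVec_mulVec, hER, one_mulVec]
  have hu : R *ᵥ v ≠ 0 := fun h => hv (by rw [← hEu, h, mulVec_zero])
  have hQu : (R * E) *ᵥ (R *ᵥ v) = R *ᵥ v := by rw [← mulVec_mulVec, hEu]
  have hQμ : (R * E * energyAdjoint S (R * E)) *ᵥ (R *ᵥ v) = μ • R *ᵥ v := by
    rw [mulVec_mulVec, mul_energyAdjoint_mul_eq_mul_bddcOperator, ← mulVec_mulVec, hμ, mulVec_smul]
  exact ⟨one_le_of_mul_energyAdjoint_mulVec_eq_smul hS hu hQu hQμ,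
    le_of_mul_energyAdjoint_mulVec_eq_smul hS hu hQu hQμ hK hPbound⟩

theorem div_le_of_mem_Icc_one {a b K : 𝕜} (ha : a ∈ Set.Icc 1 K) (hb : b ∈ Set.Icc 1 K) :
    b / a ≤ K := by
  have := mulPosReflectLE_of_starOrderedRing (𝕜 := 𝕜)
  have hK : 0 ≤ K := zero_le_one.trans (ha.1.trans ha.2)
  exact div_le_of_le_mul₀ (zero_le_one.trans ha.1) hK (hb.2.trans (le_mul_of_one_le_right hK ha.1))

theorem bddc_condition_number_bound_general (hS : S.PosDef) (hER : E * R = 1) {K : 𝕜}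
    (hK : 1 ≤ K)
    (hPbound : ∀ w, energyInner S ((1 - R * E) *ᵥ w) ((1 - R * E) *ᵥ w) ≤ K * energyInner S w w) :
    (∀ (μ : 𝕜) (v : m → 𝕜), v ≠ 0 → bddcOperator S R E *ᵥ v = μ • v → 1 ≤ μ ∧ μ ≤ K) ∧
      (∀ (μ₁ μ₂ : 𝕜) (v₁ v₂ : m → 𝕜), v₁ ≠ 0 → v₂ ≠ 0 →
        bddcOperator S R E *ᵥ v₁ = μ₁ • v₁ → bddcOperator S R E *ᵥ v₂ = μ₂ • v₂ → μ₂ / μ₁ ≤ K) :=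
  have mem_Icc {μ : 𝕜} {v : m → 𝕜} (hv : v ≠ 0) (hμ : bddcOperator S R E *ᵥ v = μ • v) :
      μ ∈ Set.Icc 1 K :=
    mem_Icc_of_bddcOperator_mulVec_eq_smul hS hER hK hPbound hv hμ
  ⟨fun _ _ hv hμ => mem_Icc hv hμ,
    fun _ _ _ _ hv₁ hv₂ hμ₁ hμ₂ => div_le_of_mem_Icc_one (mem_Icc hv₁ hμ₁) (mem_Icc hv₂ hμ₂)⟩

end Order

/-- Condition number bound for the BDDC-preconditioned operator: if the jump
operator `P := I - R E` satisfies `(P w)ᵀ S̃ (P w) ≤ K wᵀ S̃ w` for all `w`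
(`K ≥ 1`), then every real eigenvalue `μ` of `Ĝ := (E S̃⁻¹ Eᵀ)(Rᵀ S̃ R)`
satisfies `1 ≤ μ ≤ K`; in particular the ratio of any two real eigenvalues is
at most `K`, so the condition number of `Ĝ` is bounded by `K`. -/
theorem bddc_condition_number_bound {n m : ℕ}
    (St : Matrix (Fin n) (Fin n) ℝ) (hSt : St.PosDef)
    (R : Matrix (Fin n) (Fin m) ℝ) (hR : Function.Injective R.mulVec)
    (E : Matrix (Fin m) (Fin n) ℝ) (hER : E * R = 1)
    (P : Matrix (Fin n) (Fin n) ℝ) (hP : P = 1 - R * E)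
    (K : ℝ) (hK : 1 ≤ K)
    (hPbound : ∀ w : Fin n → ℝ,
      P.mulVec w ⬝ᵥ St.mulVec (P.mulVec w) ≤ K * (w ⬝ᵥ St.mulVec w)) :
    (∀ (μ : ℝ) (v : Fin m → ℝ), v ≠ 0 →
        ((E * St⁻¹ * Eᵀ) * (Rᵀ * St * R)).mulVec v = μ • v → 1 ≤ μ ∧ μ ≤ K) ∧
      (∀ (μ₁ μ₂ : ℝ) (v₁ v₂ : Fin m → ℝ), v₁ ≠ 0 → v₂ ≠ 0 →
        ((E * St⁻¹ * Eᵀ) * (Rᵀ * St * R)).mulVec v₁ = μ₁ • v₁ →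
        ((E * St⁻¹ * Eᵀ) * (Rᵀ * St * R)).mulVec v₂ = μ₂ • v₂ →
        μ₂ / μ₁ ≤ K) := by
  subst hP
  exact bddc_condition_number_bound_general hSt hER hK hPbound
end

section
/- Let S̃ be a symmetric positive definite real n×n matrix, let R be a real n×m matrix of full column rank, and let E be a real m×n matrix with E R = I_m. Set P := I_n − R E. Then every eigenvalue μ ∈ ℝ of the preconditioned matrix (E S̃⁻¹ Eᵀ)(Rᵀ S̃ R) satisfies μ ≤ 1 + sup over nonzero w ∈ ℝⁿ of the Rayleigh quotient ((P w)ᵀ S̃ (P w)) / (wᵀ S̃ w); more precisely, μ ≤ max(1, sup_{w ≠ 0} ((P w)ᵀ S̃ (P w))/(wᵀ S̃ w)). -/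
open Matrix

/-!
Let `P† = S̃⁻¹ Pᵀ S̃` be the adjoint of `P = 1 - R E` for the `S̃`-inner product. If `v` is an
eigenvector for `μ`, then `u = R v` satisfies `P u = 0` and `P P† u = P† u + (μ - 1) u`. The two
summands are `S̃`-orthogonal because `⟪u, P† u⟫ = ⟪P u, u⟫ = 0`. Pairing with `u` gives
`‖P† u‖² = (μ - 1) ‖u‖²`, and Pythagoras then gives `‖P P† u‖² = μ ‖P† u‖²`. Hence either `μ ≤ 1`,
or `P† u ≠ 0` and `μ` is the Rayleigh quotient of `P` at `P† u`.
-/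

open scoped ComplexOrder

section AdjointRelation

variable {α ι : Type*} [NonUnitalSemiring α] [StarRing α] [Fintype ι]
  {S P P' : Matrix ι ι α} {u : ι → α}

theorem star_dotProduct_mulVec_adjoint (hadj : S * P' = Pᴴ * S) (x y : ι → α) :
    star x ⬝ᵥ S *ᵥ (P' *ᵥ y) = star (P *ᵥ x) ⬝ᵥ S *ᵥ y := by
  rw [mulVec_mulVec, hadj, ← mulVec_mulVec, dotProduct_mulVec, star_mulVec]

theorem star_dotProduct_mulVec_adjoint_eq_zero (hadj : S * P' = Pᴴ * S) (hPu : P *ᵥ u = 0)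
    (x : ι → α) : star u ⬝ᵥ S *ᵥ (P' *ᵥ x) = 0 := by
  rw [star_dotProduct_mulVec_adjoint hadj, hPu, star_zero, zero_dotProduct]

theorem adjoint_symm_of_isHermitian (hS : S.IsHermitian) (hadj : S * P' = Pᴴ * S) :
    S * P = P'ᴴ * S := by
  simpa only [conjTranspose_mul, conjTranspose_conjTranspose, hS.eq] using
    (congrArg conjTranspose hadj).symm

end AdjointRelation

section Pythagoras

variable {α ι : Type*} [CommRing α] [StarRing α] [Fintype ι]
  {S P P' : Matrix ι ι α} {u : ι → α} {μ : α}

theorem star_dotProduct_mulVec_adjoint_self (hS : S.IsHermitian) (hadj : S * P' = Pᴴ * S)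
    (hPu : P *ᵥ u = 0) (hPP' : P *ᵥ (P' *ᵥ u) = P' *ᵥ u + (μ - 1) • u) :
    star (P' *ᵥ u) ⬝ᵥ S *ᵥ (P' *ᵥ u) = (μ - 1) * (star u ⬝ᵥ S *ᵥ u) := by
  rw [← star_dotProduct_mulVec_adjoint (adjoint_symm_of_isHermitian hS hadj), hPP', mulVec_add,
    dotProduct_add, star_dotProduct_mulVec_adjoint_eq_zero hadj hPu, zero_add, mulVec_smul,
    dotProduct_smul, smul_eq_mul]

theorem star_dotProduct_mulVec_mulVec_adjoint_self (hS : S.IsHermitian)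
    (hadj : S * P' = Pᴴ * S) (hPu : P *ᵥ u = 0)
    (hPP' : P *ᵥ (P' *ᵥ u) = P' *ᵥ u + (μ - 1) • u) :
    star (P *ᵥ (P' *ᵥ u)) ⬝ᵥ S *ᵥ (P *ᵥ (P' *ᵥ u)) =
      star μ * (star (P' *ᵥ u) ⬝ᵥ S *ᵥ (P' *ᵥ u)) := by
  have horth_left := star_dotProduct_mulVec_adjoint_eq_zero hadj hPu u
  have horth_right : star (P' *ᵥ u) ⬝ᵥ S *ᵥ u = 0 := by
    rw [← star_dotProduct_mulVec_adjoint (adjoint_symm_of_isHermitian hS hadj), hPu, mulVec_zero,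
      dotProduct_zero]
  have hself := star_dotProduct_mulVec_adjoint_self hS hadj hPu hPP'
  calc star (P *ᵥ (P' *ᵥ u)) ⬝ᵥ S *ᵥ (P *ᵥ (P' *ᵥ u))
      = star (P' *ᵥ u) ⬝ᵥ S *ᵥ (P' *ᵥ u) + star (μ - 1) * ((μ - 1) * (star u ⬝ᵥ S *ᵥ u)) := by
        simp only [hPP', star_add, star_smul, mulVec_add, mulVec_smul, add_dotProduct,
          dotProduct_add, smul_dotProduct, dotProduct_smul, smul_eq_mul, horth_left, horth_right]
        ring
    _ = star μ * (star (P' *ᵥ u) ⬝ᵥ S *ᵥ (P' *ᵥ u)) := by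
        rw [← hself, star_sub, star_one]
        ring

end Pythagoras

section RCLike

variable {𝕜 ι : Type*} [RCLike 𝕜] [Fintype ι]

theorem bddAbove_range_rayleigh_of_posDef {S : Matrix ι ι 𝕜} (hS : S.PosDef)
    (M : Matrix ι ι 𝕜) :
    BddAbove (Set.range fun w : {w : ι → 𝕜 // w ≠ 0} ↦
      RCLike.re (star w.1 ⬝ᵥ M *ᵥ w.1) / RCLike.re (star w.1 ⬝ᵥ S *ᵥ w.1)) := by
  have hcont : ContinuousOn
      (fun w : ι → 𝕜 ↦ RCLike.re (star w ⬝ᵥ M *ᵥ w) / RCLike.re (star w ⬝ᵥ S *ᵥ w))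
      (Metric.sphere 0 1) := by
    refine ContinuousOn.div (by fun_prop) (by fun_prop) fun w hw ↦ ?_
    exact (hS.re_dotProduct_pos (ne_zero_of_mem_unit_sphere ⟨w, hw⟩)).ne'
  obtain ⟨C, hC⟩ := (isCompact_sphere (0 : ι → 𝕜) 1).bddAbove_image hcont
  refine ⟨C, ?_⟩
  rintro _ ⟨⟨w, hw⟩, rfl⟩
  have hnorm : ‖w‖⁻¹ ≠ 0 := inv_ne_zero (norm_ne_zero_iff.mpr hw)
  have hunit : ‖w‖⁻¹ • w ∈ Metric.sphere 0 1 := by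
    simp [norm_smul, hw]
  have homog (A : Matrix ι ι 𝕜) : RCLike.re (star (‖w‖⁻¹ • w) ⬝ᵥ A *ᵥ (‖w‖⁻¹ • w)) =
      ‖w‖⁻¹ ^ 2 * RCLike.re (star w ⬝ᵥ A *ᵥ w) := by
    simp only [star_smul, star_trivial, mulVec_smul, smul_dotProduct, dotProduct_smul,
      RCLike.smul_re]
    ring
  simpa only [homog, mul_div_mul_left _ _ (pow_ne_zero 2 hnorm)] using
    hC (Set.mem_image_of_mem _ hunit)

theorem bddAbove_range_rayleigh_mulVec {S : Matrix ι ι 𝕜} (hS : S.PosDef) (P : Matrix ι ι 𝕜) :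
    BddAbove (Set.range fun w : {w : ι → 𝕜 // w ≠ 0} ↦
      RCLike.re (star (P *ᵥ w.1) ⬝ᵥ S *ᵥ (P *ᵥ w.1)) / RCLike.re (star w.1 ⬝ᵥ S *ᵥ w.1)) := by
  simpa only [star_mulVec, dotProduct_mulVec, vecMul_vecMul, Matrix.mul_assoc] using
    bddAbove_range_rayleigh_of_posDef hS (Pᴴ * S * P)

variable {S P P' : Matrix ι ι 𝕜} {u : ι → 𝕜} {μ : 𝕜}

theorem re_le_max_one_iSup_rayleigh_of_adjoint (hS : S.PosDef) (hadj : S * P' = Pᴴ * S)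
    (hu : u ≠ 0) (hPu : P *ᵥ u = 0) (hPP' : P *ᵥ (P' *ᵥ u) = P' *ᵥ u + (μ - 1) • u) :
    RCLike.re μ ≤ max 1 (⨆ w : {w : ι → 𝕜 // w ≠ 0},
      RCLike.re (star (P *ᵥ w.1) ⬝ᵥ S *ᵥ (P *ᵥ w.1)) / RCLike.re (star w.1 ⬝ᵥ S *ᵥ w.1)) := by
  refine le_max_iff.mpr ((le_or_gt (RCLike.re μ) 1).imp_right fun hμ ↦ ?_)
  have him (x : ι → 𝕜) : RCLike.im (star x ⬝ᵥ S *ᵥ x) = 0 :=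
    hS.isHermitian.im_star_dotProduct_mulVec_self x
  have hy_sq : RCLike.re (star (P' *ᵥ u) ⬝ᵥ S *ᵥ (P' *ᵥ u)) =
      (RCLike.re μ - 1) * RCLike.re (star u ⬝ᵥ S *ᵥ u) := by
    rw [star_dotProduct_mulVec_adjoint_self hS.isHermitian hadj hPu hPP', RCLike.mul_re, him,
      mul_zero, sub_zero, map_sub, RCLike.one_re]
  have hPy_sq : RCLike.re (star (P *ᵥ (P' *ᵥ u)) ⬝ᵥ S *ᵥ (P *ᵥ (P' *ᵥ u))) =
      RCLike.re μ * RCLike.re (star (P' *ᵥ u) ⬝ᵥ S *ᵥ (P' *ᵥ u)) := by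
    rw [star_dotProduct_mulVec_mulVec_adjoint_self hS.isHermitian hadj hPu hPP', RCLike.mul_re,
      him, mul_zero, sub_zero, RCLike.star_def, RCLike.conj_re]
  have hy_sq_pos : 0 < RCLike.re (star (P' *ᵥ u) ⬝ᵥ S *ᵥ (P' *ᵥ u)) :=
    hy_sq ▸ mul_pos (sub_pos.mpr hμ) (hS.re_dotProduct_pos hu)
  have hy : P' *ᵥ u ≠ 0 := fun h ↦ by simp [h] at hy_sq_pos
  calc RCLike.re μ
      = RCLike.re (star (P *ᵥ (P' *ᵥ u)) ⬝ᵥ S *ᵥ (P *ᵥ (P' *ᵥ u))) /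
          RCLike.re (star (P' *ᵥ u) ⬝ᵥ S *ᵥ (P' *ᵥ u)) := by
        rw [hPy_sq, mul_div_cancel_right₀ _ hy_sq_pos.ne']
    _ ≤ _ := le_ciSup (bddAbove_range_rayleigh_mulVec hS P) ⟨P' *ᵥ u, hy⟩

end RCLike

section Jump

variable {α ι κ : Type*} [Fintype ι] [DecidableEq ι] [Fintype κ] [DecidableEq κ]

theorem jump_mulVec_mulVec_eq_zero [Ring α] {R : Matrix ι κ α} {E : Matrix κ ι α}
    (hER : E * R = 1) (v : κ → α) : (1 - R * E) *ᵥ (R *ᵥ v) = 0 := by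
  rw [mulVec_mulVec, Matrix.sub_mul, Matrix.one_mul, Matrix.mul_assoc, hER, Matrix.mul_one,
    sub_self, zero_mulVec]

variable [CommRing α] [StarRing α] {S : Matrix ι ι α} {R : Matrix ι κ α} {E : Matrix κ ι α}
  {v : κ → α} {μ : α}

theorem jump_mulVec_adjoint_mulVec (hS : IsUnit S.det) (hER : E * R = 1)
    (heig : (E * S⁻¹ * Eᴴ * (Rᴴ * S * R)) *ᵥ v = μ • v) :
    (1 - R * E) *ᵥ ((S⁻¹ * (1 - R * E)ᴴ * S) *ᵥ (R *ᵥ v)) =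
      (S⁻¹ * (1 - R * E)ᴴ * S) *ᵥ (R *ᵥ v) + (μ - 1) • R *ᵥ v := by
  have hadjoint_eq : S⁻¹ * (1 - R * E)ᴴ * S = 1 - S⁻¹ * Eᴴ * Rᴴ * S := by
    simp only [conjTranspose_sub, conjTranspose_one, conjTranspose_mul, Matrix.mul_sub,
      Matrix.sub_mul, Matrix.mul_one, Matrix.mul_assoc, nonsing_inv_mul _ hS]
  have havg : E *ᵥ ((S⁻¹ * (1 - R * E)ᴴ * S) *ᵥ (R *ᵥ v)) = (1 - μ) • v := by
    calc E *ᵥ ((S⁻¹ * (1 - R * E)ᴴ * S) *ᵥ (R *ᵥ v))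
        = (E * R) *ᵥ v - (E * S⁻¹ * Eᴴ * (Rᴴ * S * R)) *ᵥ v := by
          simp only [hadjoint_eq, mulVec_mulVec, Matrix.sub_mul, Matrix.one_mul, Matrix.mul_assoc,
            sub_mulVec, mulVec_sub]
      _ = (1 - μ) • v := by rw [hER, heig, one_mulVec, sub_smul, one_smul]
  rw [sub_mulVec, one_mulVec, ← mulVec_mulVec _ R E, havg, mulVec_smul, sub_eq_add_neg, ← neg_smul,
    neg_sub]

end Jump

theorem bddc_max_eigenvalue_rayleigh_general {𝕜 ι κ : Type*} [RCLike 𝕜] [Fintype ι]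
    [DecidableEq ι] [Fintype κ] [DecidableEq κ] {S : Matrix ι ι 𝕜} (hS : S.PosDef)
    {R : Matrix ι κ 𝕜} {E : Matrix κ ι 𝕜} (hER : E * R = 1) {μ : 𝕜} {v : κ → 𝕜} (hv : v ≠ 0)
    (heig : (E * S⁻¹ * Eᴴ * (Rᴴ * S * R)) *ᵥ v = μ • v) :
    RCLike.re μ ≤ max 1 (⨆ w : {w : ι → 𝕜 // w ≠ 0},
      RCLike.re (star ((1 - R * E) *ᵥ w.1) ⬝ᵥ S *ᵥ ((1 - R * E) *ᵥ w.1)) /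
        RCLike.re (star w.1 ⬝ᵥ S *ᵥ w.1)) := by
  have hdet : IsUnit S.det := (isUnit_iff_isUnit_det S).mp hS.isUnit
  have hadj : S * (S⁻¹ * (1 - R * E)ᴴ * S) = (1 - R * E)ᴴ * S := by
    rw [Matrix.mul_assoc, mul_nonsing_inv_cancel_left _ _ hdet]
  have hRv : R *ᵥ v ≠ 0 := by
    refine fun h ↦ hv ?_
    rw [← one_mulVec v, ← hER, ← mulVec_mulVec, h, mulVec_zero]
  exact re_le_max_one_iSup_rayleigh_of_adjoint hS hadj hRv (jump_mulVec_mulVec_eq_zero hER v)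
    (jump_mulVec_adjoint_mulVec hdet hER heig)

/-- Eigenvalue bound via the Rayleigh quotient of the jump operator: every real
eigenvalue `μ` of `(E S̃⁻¹ Eᵀ)(Rᵀ S̃ R)` satisfies
`μ ≤ max 1 (⨆_{w ≠ 0} ((P w)ᵀ S̃ (P w)) / (wᵀ S̃ w))` where `P := I - R E`. -/
theorem bddc_max_eigenvalue_rayleigh {n m : ℕ}
    (St : Matrix (Fin n) (Fin n) ℝ) (hSt : St.PosDef)
    (R : Matrix (Fin n) (Fin m) ℝ) (hR : Function.Injective R.mulVec)
    (E : Matrix (Fin m) (Fin n) ℝ) (hER : E * R = 1)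
    (P : Matrix (Fin n) (Fin n) ℝ) (hP : P = 1 - R * E)
    (μ : ℝ) (v : Fin m → ℝ) (hv : v ≠ 0)
    (heig : ((E * St⁻¹ * Eᵀ) * (Rᵀ * St * R)).mulVec v = μ • v) :
    μ ≤ max 1 (⨆ w : {w : Fin n → ℝ // w ≠ 0},
      (P.mulVec w.1 ⬝ᵥ St.mulVec (P.mulVec w.1)) / (w.1 ⬝ᵥ St.mulVec w.1)) := by
  subst hP
  simpa using bddc_max_eigenvalue_rayleigh_general hSt hER hv (by simpa using heig)
end
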